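/- Let H and M be real symmetric positive definite n×n matrices with M ≈_ε H for some ε > 0. Then for every v ∈ ℝⁿ, the vector w := (H⁻¹ − M⁻¹)·H·v satisfies wᵀ·H·w ≤ c(ε)² · (vᵀ·H·v), i.e., ‖(H⁻¹ − M⁻¹)·H·v‖_H ≤ c(ε)·‖v‖_H, where ‖u‖_H := sqrt(uᵀ·H·u) and c(ε) := sqrt(1 + e^{2ε} − 2e^{−ε}). -/

import Mathlib

open Matrix

/-- `A ≈_ε B`: `e^{-ε}·B ⪯ A ⪯ e^{ε}·B` in the Loewner order. -/
def SpecApprox {ι : Type*} [Fintype ι] (ε : ℝ) (A B : Matrix ι ι ℝ) : Prop :=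
  (A - Real.exp (-ε) • B).PosSemidef ∧ (Real.exp ε • B - A).PosSemidef

/-- `‖X‖_L = sqrt(trace(Xᵀ L X))`. -/
noncomputable def Lnorm {ι κ : Type*} [Fintype ι] [Fintype κ]
    (L : Matrix ι ι ℝ) (X : Matrix ι κ ℝ) : ℝ :=
  Real.sqrt (Xᵀ * L * X).trace

/-- `c(ε) = sqrt(1 + e^{2ε} − 2e^{−ε})`. -/
noncomputable def cEps (ε : ℝ) : ℝ :=
  Real.sqrt (1 + Real.exp (2 * ε) - 2 * Real.exp (-ε))

/-- `H`-norm bound: for `w = (H⁻¹ − M⁻¹) H v`,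
`wᵀ H w ≤ c(ε)² vᵀ H v`. -/
theorem stmt5 {n : ℕ} (H M : Matrix (Fin n) (Fin n) ℝ)
    (hH : H.PosDef) (hM : M.PosDef)
    (ε : ℝ) (hε : 0 < ε) (hApprox : SpecApprox ε M H) :
    ∀ v : Fin n → ℝ,
      ((H⁻¹ - M⁻¹) *ᵥ (H *ᵥ v)) ⬝ᵥ (H *ᵥ ((H⁻¹ - M⁻¹) *ᵥ (H *ᵥ v))) ≤
        cEps ε ^ 2 * (v ⬝ᵥ (H *ᵥ v)) := by
  intro v
  obtain ⟨h1, h2⟩ := hApprox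
  have hMM : M * M⁻¹ = 1 :=
    Matrix.mul_nonsing_inv _ ((Matrix.isUnit_iff_isUnit_det _).1 hM.isUnit)
  have hHH : H⁻¹ * H = 1 :=
    Matrix.nonsing_inv_mul _ ((Matrix.isUnit_iff_isUnit_det _).1 hH.isUnit)
  obtain ⟨z, hz⟩ : ∃ z, z = M⁻¹ *ᵥ (H *ᵥ v) := ⟨_, rfl⟩
  have hMz : M *ᵥ z = H *ᵥ v := by
    rw [hz, Matrix.mulVec_mulVec, hMM, Matrix.one_mulVec]
  have hw : (H⁻¹ - M⁻¹) *ᵥ (H *ᵥ v) = v - z := by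
    rw [Matrix.sub_mulVec, ← hz, Matrix.mulVec_mulVec, hHH, Matrix.one_mulVec]
  have symm : ∀ A : Matrix (Fin n) (Fin n) ℝ, A.IsHermitian → ∀ x y : Fin n → ℝ,
      x ⬝ᵥ (A *ᵥ y) = y ⬝ᵥ (A *ᵥ x) := by
    intro A hA x y
    have hT : Aᵀ = A := by simpa [Matrix.IsHermitian] using hA
    rw [Matrix.dotProduct_mulVec, ← Matrix.mulVec_transpose, hT, dotProduct_comm]
  have sH := symm H hH.isHermitian v z
  have sM := symm M hM.isHermitian v z
  rw [hMz] at sM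
  have tpos := Real.exp_pos ε
  have spos := Real.exp_pos (-ε)
  have ts : Real.exp ε * Real.exp (-ε) = 1 := by rw [← Real.exp_add]; simp
  have t2 : Real.exp (2 * ε) = Real.exp ε * Real.exp ε := by rw [← Real.exp_add]; ring_nf
  have t1 : 1 < Real.exp ε := Real.one_lt_exp_iff.2 hε
  have s1 : Real.exp (-ε) < 1 := Real.exp_lt_one_iff.2 (by linarith)
  rw [hw, cEps, Real.sq_sqrt (by rw [t2]; nlinarith), t2]
  generalize Real.exp ε = t at *
  generalize Real.exp (-ε) = s at *
  have q1 := h1.dotProduct_mulVec_nonneg z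
  have q2 := h2.dotProduct_mulVec_nonneg v
  have q3 := hH.posSemidef.dotProduct_mulVec_nonneg (z - t • v)
  have q4 := hM.posSemidef.dotProduct_mulVec_nonneg (z - s • v)
  simp only [star_trivial, Matrix.sub_mulVec, Matrix.mulVec_sub, Matrix.smul_mulVec,
    Matrix.mulVec_smul, dotProduct_sub, sub_dotProduct, smul_dotProduct, dotProduct_smul,
    smul_eq_mul, hMz] at q1 q2 q3 q4 ⊢
  rw [← sM] at q4
  rw [sH] at q3 ⊢
  generalize z ⬝ᵥ (H *ᵥ z) = a at *
  generalize z ⬝ᵥ (H *ᵥ v) = b at *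
  generalize v ⬝ᵥ (H *ᵥ v) = c at *
  generalize v ⬝ᵥ (M *ᵥ v) = d at *
  have e1 : a ≤ t * b := by
    have := mul_nonneg tpos.le q1
    have h : t * (b - s * a) = t * b - (t * s) * a := by ring
    rw [h, ts] at this; linarith
  have e2 : a ≤ t * t * c := by nlinarith
  have e3 : s * c ≤ b := by
    have := mul_nonneg (mul_nonneg spos.le spos.le) q2
    have h : s * s * (t * c - d) = s * (t * s) * c - s * s * d := by ring
    rw [h, ts] at this; nlinarith
  nlinarith
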